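/- arXiv:1203.4032 — 2 statements merged into one kernel-verified Lean document; each statement's English description precedes it below -/
import Mathlib

section
/- Let 𝒯 be a cluster tree for the partition 0 = t_0 < ... < t_N = T and 0 < η ≤ 1. For each 1 ≤ n ≤ N let L_n be the unique leaf containing I_n, and let ℳ(L_n) be the minimal (L_n,η)-admissible cover. Then for every cluster C ∈ 𝒯, the set { n ∈ {1,...,N} : C ∈ ℳ(L_n) } is a (possibly empty) set of consecutive integers; that is, if it is nonempty there exist n_min(C) ≤ n_max(C) such that C ∈ ℳ(L_n) if and only if n_min(C) ≤ n ≤ n_max(C). -/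
/-!
Call a node `c` *good* for a leaf `L` if it lies in the history of `L` and is either
`(L,η)`-admissible or a leaf. The minimal cover `ℳ(L)` consists exactly of the good nodes that are
maximal under inclusion (`mem_minimalCover_iff`). This follows from the fact that every good node
belongs to some admissible cover (`exists_cover_of_good`): complete it by all leaves of the
history that are disjoint from it. That these leaves cover the rest of the history relies on the
tree structure: two nodes that meet are comparable in the tree (`Below.total_of_meet`), so a leaf
that meets a node is contained in it (`leaf_le_of_meet`).

As `n` increases, the leaf `L_n` either stays the same or moves to the right, so its history grows
and its distance to a fixed cluster in the history does not decrease. Hence being good for `L_n` is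
monotone in `n` (`Good.mono`). Now `C ∈ ℳ(L_n)` is the conjunction of "`C` is good for `L_n`", which
is preserved when `n` increases, and "no strictly larger node is good for `L_n`", which is preserved
when `n` decreases. The set of such `n` is therefore an interval.
-/


/-- A **cluster tree** on the index set `{1, …, N}`.  A cluster `C(j,n) = {I_j, …, I_n}`
of consecutive subintervals is represented by the pair `(j, n)`.  The root is `C(1,N)`
and every node is either a leaf or the disjoint union of its children. -/
structure ClusterTree (N : ℕ) where
  /-- the nodes of the tree, each a cluster `(j, n)` -/
  nodes : Finset (ℕ × ℕ)
  valid : ∀ c ∈ nodes, 1 ≤ c.1 ∧ c.1 ≤ c.2 ∧ c.2 ≤ N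
  root_mem : (1, N) ∈ nodes
  /-- the children of each node (empty iff the node is a leaf) -/
  children : ℕ × ℕ → Finset (ℕ × ℕ)
  children_sub : ∀ c ∈ nodes, children c ⊆ nodes
  /-- every non-leaf node is the union of its children -/
  children_union : ∀ c ∈ nodes, children c ≠ ∅ →
    (children c).biUnion (fun d => Finset.Icc d.1 d.2) = Finset.Icc c.1 c.2
  /-- the children of a node are pairwise disjoint -/
  children_disjoint : ∀ c ∈ nodes, ∀ d₁ ∈ children c, ∀ d₂ ∈ children c, d₁ ≠ d₂ →
    Disjoint (Finset.Icc d₁.1 d₁.2) (Finset.Icc d₂.1 d₂.2)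
  /-- every non-root node has a parent -/
  parent_exists : ∀ c ∈ nodes, c ≠ (1, N) → ∃ p ∈ nodes, c ∈ children p
  /-- parents are unique -/
  parent_unique : ∀ p₁ ∈ nodes, ∀ p₂ ∈ nodes, ∀ c : ℕ × ℕ,
    c ∈ children p₁ → c ∈ children p₂ → p₁ = p₂
  /-- the generation of a node: `0` for the root, `Gen(parent) + 1` otherwise -/
  gen : ℕ × ℕ → ℕ
  gen_root : gen (1, N) = 0
  gen_children : ∀ c ∈ nodes, ∀ d ∈ children c, gen d = gen c + 1

namespace ClusterTree

/-- A node is a leaf if it has no children. -/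
def IsLeaf {N : ℕ} (𝒯 : ClusterTree N) (c : ℕ × ℕ) : Prop :=
  c ∈ 𝒯.nodes ∧ 𝒯.children c = ∅

end ClusterTree

/-- The underlying point set `∪C(j,n) = (t_{j-1}, t_n]` of a cluster. -/
def cSet (t : ℕ → ℝ) (c : ℕ × ℕ) : Set ℝ := Set.Ioc (t (c.1 - 1)) (t c.2)

/-- The length `Len(C(j,n)) = t_n − t_{j-1}` of a cluster. -/
noncomputable def cLen (t : ℕ → ℝ) (c : ℕ × ℕ) : ℝ := t c.2 - t (c.1 - 1)

/-- The Euclidean distance between the underlying point sets of two clusters. -/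
noncomputable def cDist (t : ℕ → ℝ) (c₁ c₂ : ℕ × ℕ) : ℝ :=
  sInf {r : ℝ | ∃ x ∈ cSet t c₁, ∃ y ∈ cSet t c₂, r = |x - y|}

/-- The history `History(C(j,n)) = (0, t_{j-1}]` of a cluster. -/
def cHistory (t : ℕ → ℝ) (c : ℕ × ℕ) : Set ℝ := Set.Ioc 0 (t (c.1 - 1))

/-- A cluster `c` is `(L,η)`-admissible if `∪c ⊆ History(L)` and
`Len(c) ≤ η · Dist(c, L)`. -/
def Admissible (t : ℕ → ℝ) (η : ℝ) (L c : ℕ × ℕ) : Prop :=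
  cSet t c ⊆ cHistory t L ∧ cLen t c ≤ η * cDist t c L

/-- An `(L,η)`-admissible cover: a set of pairwise disjoint nodes of the tree whose
union is `History(L)`, each member being `(L,η)`-admissible or a leaf. -/
def AdmissibleCover {N : ℕ} (𝒯 : ClusterTree N) (t : ℕ → ℝ) (η : ℝ)
    (L : ℕ × ℕ) (𝒞 : Finset (ℕ × ℕ)) : Prop :=
  𝒞 ⊆ 𝒯.nodes ∧
  (∀ c₁ ∈ 𝒞, ∀ c₂ ∈ 𝒞, c₁ ≠ c₂ →
    Disjoint (Finset.Icc c₁.1 c₁.2) (Finset.Icc c₂.1 c₂.2)) ∧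
  (⋃ c ∈ 𝒞, cSet t c) = cHistory t L ∧
  (∀ c ∈ 𝒞, Admissible t η L c ∨ 𝒯.IsLeaf c)

/-- The minimal `(L,η)`-admissible cover: an admissible cover such that every member of
any admissible cover is contained in one of its members. -/
def IsMinimalCover {N : ℕ} (𝒯 : ClusterTree N) (t : ℕ → ℝ) (η : ℝ)
    (L : ℕ × ℕ) (ℳ : Finset (ℕ × ℕ)) : Prop :=
  AdmissibleCover 𝒯 t η L ℳ ∧
  ∀ 𝒞 : Finset (ℕ × ℕ), AdmissibleCover 𝒯 t η L 𝒞 →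
    ∀ c ∈ 𝒞, ∃ M ∈ ℳ, Finset.Icc c.1 c.2 ⊆ Finset.Icc M.1 M.2

/-- A `(G,Q)`-uniform cluster tree with constants `0 < λ < Λ`: every node has generation
at most `G`, every non-leaf node has exactly `Q` children,
`λ T Q^{−ℓ} ≤ Len(C) ≤ Λ T Q^{−ℓ}` whenever `Gen(C) = ℓ`, and for each `ℓ ≤ G` the
generation-`ℓ` nodes cover `(0, T]`. -/
def GQUniform {N : ℕ} (𝒯 : ClusterTree N) (t : ℕ → ℝ) (G Q : ℕ)
    (lam Lam : ℝ) : Prop :=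
  (∀ c ∈ 𝒯.nodes, 𝒯.gen c ≤ G) ∧
  (∀ c ∈ 𝒯.nodes, 𝒯.children c ≠ ∅ → (𝒯.children c).card = Q) ∧
  (∀ c ∈ 𝒯.nodes,
    lam * t N / (Q : ℝ) ^ 𝒯.gen c ≤ cLen t c ∧
    cLen t c ≤ Lam * t N / (Q : ℝ) ^ 𝒯.gen c) ∧
  (∀ ℓ ≤ G,
    (⋃ c ∈ 𝒯.nodes.filter (fun c => 𝒯.gen c = ℓ), cSet t c) = Set.Ioc (t 0) (t N))

/-! ### Nodes with a common subinterval -/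

namespace ClusterTree

variable {N : ℕ} (𝒯 : ClusterTree N)

/-- `𝒯.Below p c`: the node `c` is reached from `p` by finitely many (possibly zero) passages from a
node to one of its children. -/
def Below : ℕ × ℕ → ℕ × ℕ → Prop :=
  Relation.ReflTransGen fun p c => p ∈ 𝒯.nodes ∧ c ∈ 𝒯.children p

variable {𝒯}

lemma child_le {p c : ℕ × ℕ} (hp : p ∈ 𝒯.nodes) (hc : c ∈ 𝒯.children p) :
    p.1 ≤ c.1 ∧ c.2 ≤ p.2 := by
  have hv := 𝒯.valid c (𝒯.children_sub p hp hc)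
  have hu := 𝒯.children_union p hp (Finset.ne_empty_of_mem hc)
  have key : ∀ k, c.1 ≤ k → k ≤ c.2 → k ∈ Finset.Icc p.1 p.2 := fun k h1 h2 => by
    rw [← hu]
    exact Finset.mem_biUnion.2 ⟨c, hc, Finset.mem_Icc.2 ⟨h1, h2⟩⟩
  have h1 := Finset.mem_Icc.1 (key c.1 le_rfl hv.2.1)
  have h2 := Finset.mem_Icc.1 (key c.2 hv.2.1 le_rfl)
  exact ⟨h1.1, h2.2⟩

lemma Below.le {p c : ℕ × ℕ} (h : 𝒯.Below p c) : p.1 ≤ c.1 ∧ c.2 ≤ p.2 := by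
  induction h with
  | refl => exact ⟨le_rfl, le_rfl⟩
  | tail _ hbc ih =>
    have := child_le hbc.1 hbc.2
    omega

/-- Induction from the root towards the leaves; it is well founded because the generation of a child
exceeds that of its parent by one. -/
lemma node_induction {P : ℕ × ℕ → Prop} (root : P (1, N))
    (step : ∀ p ∈ 𝒯.nodes, ∀ c ∈ 𝒯.children p, P p → P c) :
    ∀ c ∈ 𝒯.nodes, P c := by
  have : ∀ k, ∀ c ∈ 𝒯.nodes, 𝒯.gen c = k → P c := by
    intro k
    induction k with
    | zero =>
      intro c hc hk
      by_cases h : c = (1, N)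
      · exact h ▸ root
      · obtain ⟨p, hp, hpc⟩ := 𝒯.parent_exists c hc h
        have := 𝒯.gen_children p hp c hpc
        omega
    | succ k ih =>
      intro c hc hk
      by_cases h : c = (1, N)
      · exact h ▸ root
      · obtain ⟨p, hp, hpc⟩ := 𝒯.parent_exists c hc h
        have := 𝒯.gen_children p hp c hpc
        exact step p hp c hpc (ih p hp (by omega))
  exact fun c hc => this _ c hc rfl

/-- Two nodes having a subinterval in common are comparable in the tree. -/
lemma Below.total_of_meet {e : ℕ × ℕ} (he : e ∈ 𝒯.nodes) :
    ∀ d ∈ 𝒯.nodes, ∀ k, d.1 ≤ k → k ≤ d.2 → e.1 ≤ k → k ≤ e.2 →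
      𝒯.Below d e ∨ 𝒯.Below e d := by
  refine node_induction ?_ ?_
  · intro _ _ _ _ _
    left
    refine node_induction (P := fun e => 𝒯.Below (1, N) e) .refl ?_ e he
    exact fun p hp c hc h => h.tail ⟨hp, hc⟩
  · intro p hp d hd ih k h1 h2 h3 h4
    have hle := child_le hp hd
    rcases ih k (by omega) (by omega) h3 h4 with h | h
    · rcases Relation.ReflTransGen.cases_head h with rfl | ⟨d', hpd', hd'e⟩
      · exact .inr (.single ⟨hp, hd⟩)
      · -- `d` and `d'` are children of `p` which both contain `k`, hence they coincide.
        left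
        by_cases hdd : d = d'
        · exact hdd ▸ hd'e
        · have hsub := Below.le hd'e
          have := 𝒯.children_disjoint p hp d hd d' hpd'.2 hdd
          exact absurd (Finset.mem_Icc.2 ⟨by omega, by omega⟩)
            (Finset.disjoint_left.1 this (Finset.mem_Icc.2 ⟨h1, h2⟩))
    · exact .inr (h.tail ⟨hp, hd⟩)

lemma leaf_le_of_meet {l d : ℕ × ℕ} (hl : 𝒯.IsLeaf l) (hd : d ∈ 𝒯.nodes) {k : ℕ}
    (h1 : d.1 ≤ k) (h2 : k ≤ d.2) (h3 : l.1 ≤ k) (h4 : k ≤ l.2) :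
    d.1 ≤ l.1 ∧ l.2 ≤ d.2 := by
  rcases Below.total_of_meet hl.1 d hd k h1 h2 h3 h4 with h | h
  · exact Below.le h
  · rcases Relation.ReflTransGen.cases_head h with rfl | ⟨x, hx, _⟩
    · exact ⟨le_rfl, le_rfl⟩
    · have hx2 := hx.2
      rw [hl.2] at hx2
      exact absurd hx2 (Finset.notMem_empty x)

lemma leaf_eq_of_meet {l d : ℕ × ℕ} (hl : 𝒯.IsLeaf l) (hd : 𝒯.IsLeaf d) {k : ℕ}
    (h1 : d.1 ≤ k) (h2 : k ≤ d.2) (h3 : l.1 ≤ k) (h4 : k ≤ l.2) : l = d := by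
  have a := leaf_le_of_meet hl hd.1 h1 h2 h3 h4
  have b := leaf_le_of_meet hd hl.1 h3 h4 h1 h2
  exact Prod.ext (by omega) (by omega)

end ClusterTree

/-! ### Good nodes and their monotonicity -/

open ClusterTree

/-- A node is good for the leaf `L` if it lies in the history of `L` and is `(L,η)`-admissible or a
leaf. Lying in the history is expressed through indices: the last subinterval of `c` precedes the
first one of `L`. -/
def Good {N : ℕ} (𝒯 : ClusterTree N) (t : ℕ → ℝ) (η : ℝ) (L c : ℕ × ℕ) : Prop :=
  c ∈ 𝒯.nodes ∧ c.2 < L.1 ∧ (Admissible t η L c ∨ 𝒯.IsLeaf c)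

section Partition

variable {N : ℕ} {t : ℕ → ℝ}

lemma t_lt (htmono : ∀ i, i < N → t i < t (i + 1)) {a b : ℕ} (hab : a < b) (hb : b ≤ N) :
    t a < t b := by
  induction b, hab using Nat.le_induction with
  | base => exact htmono a (by omega)
  | succ b hab ih => exact (ih (by omega)).trans (htmono b (by omega))

lemma t_le (htmono : ∀ i, i < N → t i < t (i + 1)) {a b : ℕ} (hab : a ≤ b) (hb : b ≤ N) :
    t a ≤ t b := by
  rcases hab.eq_or_lt with rfl | h
  · exact le_rfl
  · exact (t_lt htmono h hb).le

lemma cSet_subset_history (ht0 : t 0 = 0) (htmono : ∀ i, i < N → t i < t (i + 1))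
    {L c : ℕ × ℕ} (hLN : L.1 ≤ N) (hc : c.1 ≤ c.2) (h : c.2 < L.1) :
    cSet t c ⊆ cHistory t L := by
  intro x hx
  have h1 : t 0 ≤ t (c.1 - 1) := t_le htmono (by omega) (by omega)
  have h2 : t c.2 ≤ t (L.1 - 1) := t_le htmono (by omega) (by omega)
  exact ⟨by linarith [hx.1], hx.2.trans h2⟩

lemma lt_of_cSet_subset_history (htmono : ∀ i, i < N → t i < t (i + 1))
    {L c : ℕ × ℕ} (hL1 : 1 ≤ L.1) (hcN : c.2 ≤ N) (hc1 : 1 ≤ c.1) (hc : c.1 ≤ c.2)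
    (h : cSet t c ⊆ cHistory t L) : c.2 < L.1 := by
  by_contra! hlt
  have hx : t c.2 ∈ cSet t c := ⟨t_lt htmono (by omega) hcN, le_rfl⟩
  have := (h hx).2
  have := t_lt htmono (show L.1 - 1 < c.2 by omega) hcN
  linarith

/-- The distance from a cluster in the history of `L` does not decrease when `L` is replaced by a
cluster to the right of it. -/
lemma cDist_mono (htmono : ∀ i, i < N → t i < t (i + 1)) {L L' c : ℕ × ℕ}
    (hc1 : 1 ≤ c.1) (hc : c.1 ≤ c.2) (hL : L.1 ≤ L.2) (hL' : L'.1 ≤ L'.2) (hN : L'.2 ≤ N)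
    (hcL : c.2 < L.1) (hLL : L.2 < L'.1) : cDist t c L ≤ cDist t c L' := by
  refine le_csInf ⟨_, t c.2, ⟨t_lt htmono (by omega) (by omega), le_rfl⟩,
    t L'.2, ⟨t_lt htmono (by omega) hN, le_rfl⟩, rfl⟩ ?_
  rintro r ⟨x, hx, y, hy, rfl⟩
  -- The right end point `t L.2` of `L` is closer to `x` than `y` is.
  refine csInf_le_of_le (b := |x - t L.2|) ⟨0, ?_⟩
    ⟨x, hx, t L.2, ⟨t_lt htmono (by omega) (by omega), le_rfl⟩, rfl⟩ ?_
  · rintro r ⟨_, _, _, _, rfl⟩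
    exact abs_nonneg _
  · have h1 : t c.2 ≤ t L.2 := t_le htmono (by omega) (by omega)
    have h2 : t L.2 ≤ t (L'.1 - 1) := t_le htmono (by omega) (by omega)
    have h3 := hx.2
    have h4 := hy.1
    rw [abs_of_nonpos (by linarith), abs_of_nonpos (by linarith)]
    linarith

/-- A node that is good for `L` remains good for any leaf to the right of `L`. -/
lemma Good.mono (ht0 : t 0 = 0) (htmono : ∀ i, i < N → t i < t (i + 1)) {𝒯 : ClusterTree N}
    {η : ℝ} (hη : 0 < η) {L L' c : ℕ × ℕ} (hL : 𝒯.IsLeaf L) (hL' : 𝒯.IsLeaf L')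
    (hLL : L.2 < L'.1) (h : Good 𝒯 t η L c) : Good 𝒯 t η L' c := by
  obtain ⟨hc, hlt, hadm⟩ := h
  have v := 𝒯.valid c hc
  have vL := 𝒯.valid L hL.1
  have vL' := 𝒯.valid L' hL'.1
  refine ⟨hc, by omega, hadm.imp_left fun ha => ⟨?_, ha.2.trans ?_⟩⟩
  · exact cSet_subset_history ht0 htmono (by omega) v.2.1 (by omega)
  · exact mul_le_mul_of_nonneg_left
      (cDist_mono htmono v.1 v.2.1 vL.2.1 vL'.2.1 vL'.2.2 hlt hLL) hη.le

lemma AdmissibleCover.good (htmono : ∀ i, i < N → t i < t (i + 1)) {𝒯 : ClusterTree N}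
    {η : ℝ} {L c : ℕ × ℕ} {𝒞 : Finset (ℕ × ℕ)} (hL : 𝒯.IsLeaf L)
    (h : AdmissibleCover 𝒯 t η L 𝒞) (hc : c ∈ 𝒞) : Good 𝒯 t η L c := by
  have v := 𝒯.valid c (h.1 hc)
  refine ⟨h.1 hc, ?_, h.2.2.2 c hc⟩
  refine lt_of_cSet_subset_history htmono (𝒯.valid L hL.1).1 v.2.2 v.1 v.2.1 ?_
  rw [← h.2.2.1]
  exact Set.subset_biUnion_of_mem (u := fun c => cSet t c) hc

/-! ### The minimal cover as the set of maximal good nodes -/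

/-- Every good node `D` belongs to an admissible cover, namely `D` together with the leaves of the
history that are disjoint from `D`. -/
lemma exists_cover_of_good (ht0 : t 0 = 0) (htmono : ∀ i, i < N → t i < t (i + 1))
    {𝒯 : ClusterTree N} {η : ℝ} {L D : ℕ × ℕ} (hL : 𝒯.IsLeaf L)
    (hleaf : ∀ m, 1 ≤ m → m ≤ N → ∃ l, 𝒯.IsLeaf l ∧ l.1 ≤ m ∧ m ≤ l.2)
    (hD : Good 𝒯 t η L D) : ∃ 𝒞, AdmissibleCover 𝒯 t η L 𝒞 ∧ D ∈ 𝒞 := by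
  classical
  have vL := 𝒯.valid L hL.1
  have vD := 𝒯.valid D hD.1
  refine ⟨insert D (𝒯.nodes.filter fun l => 𝒯.IsLeaf l ∧ l.2 < L.1 ∧ (l.2 < D.1 ∨ D.2 < l.1)),
    ⟨?_, ?_, ?_, ?_⟩, Finset.mem_insert_self _ _⟩
  · exact Finset.insert_subset hD.1 (Finset.filter_subset _ _)
  · intro a ha b hb hab
    rw [Finset.disjoint_left]
    intro k hka hkb
    rw [Finset.mem_Icc] at hka hkb
    rw [Finset.mem_insert, Finset.mem_filter] at ha hb
    rcases ha with rfl | ⟨-, la, -, ha⟩ <;> rcases hb with rfl | ⟨-, lb, -, hb⟩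
    · exact hab rfl
    · omega
    · omega
    · exact hab (leaf_eq_of_meet la lb hkb.1 hkb.2 hka.1 hka.2)
  · apply Set.Subset.antisymm
    · refine Set.iUnion₂_subset fun c hc => ?_
      rw [Finset.mem_insert, Finset.mem_filter] at hc
      rcases hc with rfl | ⟨hc, -, hlt, -⟩
      · exact cSet_subset_history ht0 htmono (by omega) vD.2.1 hD.2.1
      · have v := 𝒯.valid c hc
        exact cSet_subset_history ht0 htmono (by omega) v.2.1 hlt
    · intro x hx
      -- `m` is the index of the subinterval containing `x`.
      have hex : ∃ m, x ≤ t m := ⟨L.1 - 1, hx.2⟩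
      obtain ⟨m, hm, hmin⟩ : ∃ m, x ≤ t m ∧ ∀ k < m, t k < x :=
        ⟨Nat.find hex, Nat.find_spec hex, fun k hk => not_le.1 (Nat.find_min hex hk)⟩
      have hm0 : m ≠ 0 := by
        rintro rfl
        have := hx.1
        linarith
      have hmL : m ≤ L.1 - 1 := by
        by_contra! hlt
        have := hmin _ hlt
        have := hx.2
        linarith
      have hmem : ∀ c : ℕ × ℕ, 1 ≤ c.1 → c.1 ≤ m → m ≤ c.2 → c.2 ≤ N → x ∈ cSet t c :=
        fun c _ _ h2 h3 => ⟨hmin _ (by omega), hm.trans (t_le htmono h2 h3)⟩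
      rw [Set.mem_iUnion₂]
      by_cases hmD : D.1 ≤ m ∧ m ≤ D.2
      · exact ⟨D, Finset.mem_insert_self _ _, hmem D vD.1 hmD.1 hmD.2 vD.2.2⟩
      · obtain ⟨l, ll, hl1, hl2⟩ := hleaf m (by omega) (by omega)
        have vl := 𝒯.valid l ll.1
        refine ⟨l, Finset.mem_insert_of_mem (Finset.mem_filter.2 ⟨ll.1, ll, ?_, ?_⟩),
          hmem l vl.1 hl1 hl2 vl.2.2⟩
        · by_contra! hlt
          have := leaf_eq_of_meet ll hL (k := L.1) le_rfl vL.2.1 (by omega) hlt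
          subst this
          omega
        · by_contra! hmeet
          have := leaf_le_of_meet ll hD.1 (k := max D.1 l.1) (by omega) (by omega)
            (by omega) (by omega)
          omega
  · intro c hc
    rw [Finset.mem_insert, Finset.mem_filter] at hc
    rcases hc with rfl | hc
    · exact hD.2.2
    · exact .inr hc.2.1

/-- The minimal cover consists of the maximal good nodes. -/
lemma mem_minimalCover_iff (ht0 : t 0 = 0) (htmono : ∀ i, i < N → t i < t (i + 1))
    {𝒯 : ClusterTree N} {η : ℝ} {L C : ℕ × ℕ} {ℳ : Finset (ℕ × ℕ)} (hL : 𝒯.IsLeaf L)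
    (hleaf : ∀ m, 1 ≤ m → m ≤ N → ∃ l, 𝒯.IsLeaf l ∧ l.1 ≤ m ∧ m ≤ l.2)
    (hℳ : IsMinimalCover 𝒯 t η L ℳ) :
    C ∈ ℳ ↔ Good 𝒯 t η L C ∧ ∀ D, Good 𝒯 t η L D → D.1 ≤ C.1 → C.2 ≤ D.2 → D = C := by
  have hsub : ∀ D, Good 𝒯 t η L D → ∃ M ∈ ℳ, M.1 ≤ D.1 ∧ D.2 ≤ M.2 := by
    intro D hD
    obtain ⟨𝒞, h𝒞, hD𝒞⟩ := exists_cover_of_good ht0 htmono hL hleaf hD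
    obtain ⟨M, hM, h⟩ := hℳ.2 𝒞 h𝒞 D hD𝒞
    exact ⟨M, hM, (Finset.Icc_subset_Icc_iff (𝒯.valid D hD.1).2.1).1 h⟩
  constructor
  · intro hC
    have gC := hℳ.1.good htmono hL hC
    refine ⟨gC, fun D hD h1 h2 => ?_⟩
    obtain ⟨M, hM, h3, h4⟩ := hsub D hD
    have vC := 𝒯.valid C gC.1
    have hCM : C = M := by
      by_contra hne
      exact absurd (Finset.mem_Icc.2 ⟨by omega, by omega⟩)
        (Finset.disjoint_left.1 (hℳ.1.2.1 C hC M hM hne)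
          (Finset.mem_Icc.2 ⟨le_rfl, vC.2.1⟩))
    subst hCM
    exact Prod.ext (by omega) (by omega)
  · rintro ⟨gC, hmax⟩
    obtain ⟨M, hM, h1, h2⟩ := hsub C gC
    exact hmax M (hℳ.1.good htmono hL hM) h1 h2 ▸ hM

end Partition

/-- **Consecutiveness of the activity window (Section 6).**
For each `n` let `L_n` be the leaf containing `I_n` and `ℳ(L_n)` the minimal
`(L_n,η)`-admissible cover.  For every cluster `C`, the set
`{n : C ∈ ℳ(L_n)}` is a set of consecutive integers: if it is nonempty there are
`n_min ≤ n_max` with `C ∈ ℳ(L_n) ↔ n_min ≤ n ≤ n_max`. -/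
theorem minimal_cover_membership_consecutive
    {N : ℕ} (hN : 1 ≤ N) (t : ℕ → ℝ) (ht0 : t 0 = 0)
    (htmono : ∀ i, i < N → t i < t (i + 1))
    (𝒯 : ClusterTree N)
    (η : ℝ) (hη0 : 0 < η) (hη1 : η ≤ 1)
    (L : ℕ → ℕ × ℕ)
    (hL : ∀ n, 1 ≤ n → n ≤ N → 𝒯.IsLeaf (L n) ∧ (L n).1 ≤ n ∧ n ≤ (L n).2)
    (ℳ : ℕ → Finset (ℕ × ℕ))
    (hℳ : ∀ n, 1 ≤ n → n ≤ N → IsMinimalCover 𝒯 t η (L n) (ℳ n)) :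
    ∀ C : ℕ × ℕ, (∃ n, 1 ≤ n ∧ n ≤ N ∧ C ∈ ℳ n) →
      ∃ nmin nmax : ℕ, 1 ≤ nmin ∧ nmin ≤ nmax ∧ nmax ≤ N ∧
        ∀ n, 1 ≤ n → n ≤ N → (C ∈ ℳ n ↔ nmin ≤ n ∧ n ≤ nmax) := by
  classical
  have hleaf : ∀ m, 1 ≤ m → m ≤ N → ∃ l, 𝒯.IsLeaf l ∧ l.1 ≤ m ∧ m ≤ l.2 :=
    fun m h1 h2 => ⟨L m, hL m h1 h2⟩
  have hchar := fun C n (h1 : 1 ≤ n) (h2 : n ≤ N) =>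
    mem_minimalCover_iff (C := C) ht0 htmono (hL n h1 h2).1 hleaf (hℳ n h1 h2)
  have hmono : ∀ D a b, 1 ≤ a → a ≤ b → b ≤ N →
      Good 𝒯 t η (L a) D → Good 𝒯 t η (L b) D := by
    intro D a b ha hab hb hD
    obtain ⟨la, ha1, ha2⟩ := hL a ha (by omega)
    obtain ⟨lb, hb1, hb2⟩ := hL b (by omega) hb
    by_cases hlt : (L a).2 < (L b).1
    · exact hD.mono ht0 htmono hη0 la lb hlt
    · have : L a = L b := leaf_eq_of_meet la lb (k := max (L a).1 (L b).1)
        (by omega) (by omega) (by omega) (by omega)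
      exact this ▸ hD
  rintro C ⟨n₀, h1, h2, h3⟩
  have hS : ((Finset.Icc 1 N).filter fun n => C ∈ ℳ n).Nonempty :=
    ⟨n₀, Finset.mem_filter.2 ⟨Finset.mem_Icc.2 ⟨h1, h2⟩, h3⟩⟩
  obtain ⟨a, ha, hamin⟩ := Finset.exists_min_image _ id hS
  obtain ⟨b, hb, hbmax⟩ := Finset.exists_max_image _ id hS
  have hab : a ≤ b := hamin b hb
  rw [Finset.mem_filter, Finset.mem_Icc] at ha hb
  refine ⟨a, b, ha.1.1, hab, hb.1.2, fun n hn1 hnN => ⟨fun hn => ?_, fun ⟨han, hnb⟩ => ?_⟩⟩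
  · have hnS : n ∈ (Finset.Icc 1 N).filter fun n => C ∈ ℳ n :=
      Finset.mem_filter.2 ⟨Finset.mem_Icc.2 ⟨hn1, hnN⟩, hn⟩
    exact ⟨hamin n hnS, hbmax n hnS⟩
  · rw [hchar C n hn1 hnN]
    have gA := (hchar C a ha.1.1 ha.1.2).1 ha.2
    have gB := (hchar C b hb.1.1 hb.1.2).1 hb.2
    exact ⟨hmono C a n ha.1.1 han hnN gA.1,
      fun D hD => gB.2 D (hmono D n b hn1 hnb hb.1.2 hD)⟩
end

section
/- Let ν = 1/2 and 1 ≤ j ≤ n−1 ≤ N−1, and write Δ_nj = t_{n−1/2} − t_{j−1/2} and R_{*⋄} = √( Δ_nj * k_j/2 ⋄ k_n/2 ) for signs *, ⋄ ∈ {+,−} (so e.g. R_{+−} = √(Δ_nj + k_j/2 − k_n/2)). Then β_nj = ( k_n k_j / Γ(3/2) ) · [ 1 / ( (R_{−+} + R_{−−})(R_{++} + R_{+−}) ) ] · ( 1/(R_{++} + R_{−+}) + 1/(R_{+−} + R_{−−}) ). -/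
/-!
Each power `(c - s) ^ (-1/2)` integrates exactly, so with `Γ(3/2) = Γ(1/2) / 2` the weight is
`(Rpm - Rmm - Rpp + Rmp) / Γ(3/2)` (`integral_sub_rpow_neg_half`). The four roots satisfy
`Rpp² - Rmp² = Rpm² - Rmm² = k_j` and `Rpp² - Rpm² = Rmp² - Rmm² = k_n`. Rationalizing the second
difference of square roots twice, once in the `j`-direction and once in the `n`-direction, turns it
into the claimed cancellation-free expression (`second_difference_eq`).
-/

open Real

/-- The inverse square root has the antiderivative `-2 √(c - s)`; the singularity at `s = c` is
integrable, so `b = c` is allowed. -/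
lemma integral_sub_rpow_neg_half (a b c : ℝ) :
    ∫ s in a..b, (c - s) ^ ((1 / 2 : ℝ) - 1) = 2 * (√(c - a) - √(c - b)) := by
  rw [intervalIntegral.integral_comp_sub_left (fun x : ℝ => x ^ ((1 / 2 : ℝ) - 1)),
    integral_rpow (Or.inl (by norm_num)), Real.sqrt_eq_rpow, Real.sqrt_eq_rpow]
  norm_num
  ring

lemma intervalIntegrable_sub_rpow_neg_half (a b c : ℝ) :
    IntervalIntegrable (fun s : ℝ => (c - s) ^ ((1 / 2 : ℝ) - 1)) MeasureTheory.volume a b := by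
  have h := (intervalIntegral.intervalIntegrable_rpow' (a := c - a) (b := c - b)
    (r := (1 / 2 : ℝ) - 1) (by norm_num)).comp_sub_left c
  simpa using h

/-- Rationalization of a mixed second difference: `x, y, z, w` stand for `Rpp, Rpm, Rmp, Rmm`, and
`p, q` for `k_n, k_j`. -/
lemma second_difference_eq {x y z w p q : ℝ} (hx : 0 < x) (hy : 0 < y) (hz : 0 < z) (hw : 0 ≤ w)
    (hxy : x ^ 2 - y ^ 2 = p) (hzw : z ^ 2 - w ^ 2 = p)
    (hxz : x ^ 2 - z ^ 2 = q) (hyw : y ^ 2 - w ^ 2 = q) :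
    y - w - x + z
      = p * q * (1 / ((z + w) * (x + y))) * (1 / (x + z) + 1 / (y + w)) := by
  have h1 : y - w = q / (y + w) := by
    rw [eq_div_iff (by positivity)]; linear_combination hyw
  have h2 : x - z = q / (x + z) := by
    rw [eq_div_iff (by positivity)]; linear_combination hxz
  have h3 : x - y = p / (x + y) := by
    rw [eq_div_iff (by positivity)]; linear_combination hxy
  have h4 : z - w = p / (z + w) := by
    rw [eq_div_iff (by positivity)]; linear_combination hzw
  calc y - w - x + z = q / (y + w) - q / (x + z) := by rw [← h1, ← h2]; ring
    _ = q * ((x - y) + (z - w)) / ((y + w) * (x + z)) := by field_simp; ring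
    _ = _ := by rw [h3, h4]; field_simp; ring

/-- **Closed form of the weights for `ν = 1/2` (Appendix B).**
Writing `Δ_nj = t_{n−1/2} − t_{j−1/2}` and `R_{*⋄} = √(Δ_nj * k_j/2 ⋄ k_n/2)`,
`β_nj = (k_n k_j/Γ(3/2)) · [1/((R_{−+}+R_{−−})(R_{++}+R_{+−}))] ·
        (1/(R_{++}+R_{−+}) + 1/(R_{+−}+R_{−−}))`. -/
theorem beta_closed_form_half
    (T : ℝ) (hT : 0 < T) (N : ℕ) (hN : 1 ≤ N)
    (t : ℕ → ℝ) (ht0 : t 0 = 0) (htN : t N = T)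
    (htmono : ∀ i, i < N → t i < t (i + 1))
    (ν : ℝ) (hν : ν = 1 / 2)
    (k : ℕ → ℝ) (hk : ∀ n, k n = t n - t (n - 1))
    (β : ℕ → ℕ → ℝ)
    (hβ : ∀ j n, 1 ≤ j → j < n → n ≤ N →
      β n j = ∫ s in (t (j - 1))..(t j),
        ((t (n - 1) - s) ^ (ν - 1) - (t n - s) ^ (ν - 1)) / Real.Gamma ν)
    (j n : ℕ) (hj : 1 ≤ j) (hjn : j < n) (hnN : n ≤ N)
    (Δ : ℝ) (hΔ : Δ = (t (n - 1) + t n) / 2 - (t (j - 1) + t j) / 2)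
    (Rpp Rpm Rmp Rmm : ℝ)
    (hRpp : Rpp = Real.sqrt (Δ + k j / 2 + k n / 2))
    (hRpm : Rpm = Real.sqrt (Δ + k j / 2 - k n / 2))
    (hRmp : Rmp = Real.sqrt (Δ - k j / 2 + k n / 2))
    (hRmm : Rmm = Real.sqrt (Δ - k j / 2 - k n / 2)) :
    β n j
      = (k n * k j / Real.Gamma (3 / 2))
          * (1 / ((Rmp + Rmm) * (Rpp + Rpm)))
          * (1 / (Rpp + Rmp) + 1 / (Rpm + Rmm)) := by
  have hmono : MonotoneOn t (Set.Iic N) :=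
    monotoneOn_of_le_add_one Set.ordConnected_Iic fun i _ _ hi =>
      (htmono i (Nat.lt_of_succ_le hi)).le
  have hab : t (j - 1) < t j := by
    have h := htmono (j - 1) (by omega)
    rwa [Nat.sub_add_cancel hj] at h
  have hcd : t (n - 1) < t n := by
    have h := htmono (n - 1) (by omega)
    rwa [Nat.sub_add_cancel (by omega)] at h
  have hbc : t j ≤ t (n - 1) :=
    hmono (Set.mem_Iic.2 (by omega)) (Set.mem_Iic.2 (by omega)) (by omega)
  -- The four arguments of the roots are distances between the endpoints of the two intervals.
  have epp : Δ + k j / 2 + k n / 2 = t n - t (j - 1) := by rw [hΔ, hk, hk]; ring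
  have epm : Δ + k j / 2 - k n / 2 = t (n - 1) - t (j - 1) := by rw [hΔ, hk, hk]; ring
  have emp : Δ - k j / 2 + k n / 2 = t n - t j := by rw [hΔ, hk, hk]; ring
  have emm : Δ - k j / 2 - k n / 2 = t (n - 1) - t j := by rw [hΔ, hk, hk]; ring
  rw [epp] at hRpp
  rw [epm] at hRpm
  rw [emp] at hRmp
  rw [emm] at hRmm
  have spp : Rpp ^ 2 = t n - t (j - 1) := by rw [hRpp]; exact Real.sq_sqrt (by linarith)
  have spm : Rpm ^ 2 = t (n - 1) - t (j - 1) := by rw [hRpm]; exact Real.sq_sqrt (by linarith)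
  have smp : Rmp ^ 2 = t n - t j := by rw [hRmp]; exact Real.sq_sqrt (by linarith)
  have smm : Rmm ^ 2 = t (n - 1) - t j := by rw [hRmm]; exact Real.sq_sqrt (by linarith)
  have key : Rpm - Rmm - Rpp + Rmp = k n * k j * (1 / ((Rmp + Rmm) * (Rpp + Rpm)))
      * (1 / (Rpp + Rmp) + 1 / (Rpm + Rmm)) := by
    refine second_difference_eq ?_ ?_ ?_ ?_ ?_ ?_ ?_ ?_
    · rw [hRpp]; exact Real.sqrt_pos.2 (by linarith)
    · rw [hRpm]; exact Real.sqrt_pos.2 (by linarith)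
    · rw [hRmp]; exact Real.sqrt_pos.2 (by linarith)
    · rw [hRmm]; exact Real.sqrt_nonneg _
    · rw [spp, spm, hk]; ring
    · rw [smp, smm, hk]; ring
    · rw [spp, smp, hk]; ring
    · rw [spm, smm, hk]; ring
  have hΓ : Real.Gamma (3 / 2) = 1 / 2 * Real.Gamma (1 / 2) := by
    rw [← Real.Gamma_add_one (by norm_num)]; norm_num
  have hΓ0 : Real.Gamma (1 / 2) ≠ 0 := (Real.Gamma_pos_of_pos (by norm_num)).ne'
  have hβ' : β n j = (Rpm - Rmm - Rpp + Rmp) / Real.Gamma (3 / 2) := by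
    rw [hβ j n hj hjn hnN, hν, intervalIntegral.integral_div,
      intervalIntegral.integral_sub (intervalIntegrable_sub_rpow_neg_half _ _ _)
        (intervalIntegrable_sub_rpow_neg_half _ _ _),
      integral_sub_rpow_neg_half, integral_sub_rpow_neg_half, ← hRpp, ← hRpm, ← hRmp, ← hRmm, hΓ]
    field_simp
    ring
  rw [hβ', key]
  ring
end
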